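/- arXiv:2305.00580 — 2 statements merged into one kernel-verified Lean document; each statement's English description precedes it below -/
import Mathlib

section
/- Let Ω ⊂ ℝ^d be compact and convex with non-negligible interior, μ ∈ 𝒫(Ω), and define F : C(Ω) → ℝ by F(φ) = −∫_Ω φ^{c₂} dμ. Then for every φ ∈ C(Ω), the subdifferential ∂F(φ) is non-empty and equals {ρ ∈ 𝒫(Ω) : ∫_Ω φ^{c₂} dμ + ∫_Ω φ dρ = (1/2)W₂²(ρ,μ)}. Furthermore, if ∂Ω has Lebesgue measure 0, μ is absolutely continuous with respect to Lebesgue measure, and T : Ω → Ω is any Borel map μ-a.e. equal to I − ∇φ^{c₂}, then ∂F(φ) = {T_# μ}. -/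
/-!
Weak duality says that `∫ φ^{c₂} dμ + ∫ φ dρ ≤ (1/2) W₂²(ρ,μ)` for all `φ ∈ C(Ω)` and `ρ ∈ 𝒫(Ω)`.
Moreover `ρ ∈ ∂F(φ)` just means that `φ` maximizes `ψ ↦ ∫ ψ^{c₂} dμ + ∫ ψ dρ`
(`mem_subdiffC_iff_dual_max`). Hence a `ρ ∈ 𝒫(Ω)` attaining equality at `φ` is a subgradient.

Conversely, let `ξ ∈ ∂F(φ)`. The competitors `φ - f` with `f ≥ 0`, `φ + t` with `t = ±1`, and
`φ + 1_{Ωᶜ}` (which is `φ` as an element of `C(Ω)`) show that `ξ` is nonnegative, of mass one, and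
concentrated on `Ω` (`probOn_of_mem_subdiffC`). As `φ` is then a maximizer of the dual problem,
strong Kantorovich duality yields equality. The form of duality used here is `exists_plan`:
the functional `u ⊕ v + t c ↦ ∫ u dρ + ∫ v dμ + t W`, with `W` the dual value, is nonnegative on
nonnegative functions, so the M. Riesz extension theorem and the Riesz-Markov-Kakutani theorem
represent it by a measure on `Ω × Ω`, which is a coupling of cost `W`.

Non-emptiness (`exists_subgradient`) is Hahn-Banach for the sublinear functional
`N(t,ψ) = -∫ inf_y (t c(x,y) - ψ(y)) dμ(x)` on `ℝ × C(Ω)`, the homogenization of `F = N(1,·)`.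

For the last claim, the plan found above has cost equal to the dual value at `φ`, hence is
concentrated on the set where `φ^{c₂}(x) + φ(y) = c₂(x,y)`. The function `φ^{c₂} - |·|²/2` is
Lipschitz, so by Rademacher's theorem `φ^{c₂}` is differentiable `μ`-a.e., and at such a point `x`
the first-order condition gives `y = x - ∇φ^{c₂}(x) = T x`. Thus `ρ = T_# μ`
(`eq_map_of_dual_max`), and non-emptiness of `∂F(φ)` gives the converse.
-/

open MeasureTheory Filter Topology

noncomputable section

abbrev Ed (d : ℕ) := EuclideanSpace ℝ (Fin d)

variable {d : ℕ}

/-- `γ` is a coupling (transport plan) between `μ` and `ν`. -/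
def IsCoupling (μ ν : Measure (Ed d)) (γ : Measure (Ed d × Ed d)) : Prop :=
  γ.map Prod.fst = μ ∧ γ.map Prod.snd = ν

/-- The optimal transport cost `𝓘_c(μ,ν)` for the pointwise cost `c`. -/
def tCost (c : Ed d → Ed d → ℝ) (μ ν : Measure (Ed d)) : ℝ :=
  sInf {r | ∃ γ : Measure (Ed d × Ed d), IsCoupling μ ν γ ∧ r = ∫ p, c p.1 p.2 ∂γ}

/-- The Wasserstein-1 distance. -/
def W1 (μ ν : Measure (Ed d)) : ℝ := tCost (fun x y => ‖x - y‖) μ ν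

/-- The squared Wasserstein-2 distance `W₂²(μ,ν)`. -/
def W2sq (μ ν : Measure (Ed d)) : ℝ := tCost (fun x y => ‖x - y‖ ^ 2) μ ν

/-- The quadratic cost `c₂(x,y) = |x-y|²/2`. -/
def c2 (x y : Ed d) : ℝ := ‖x - y‖ ^ 2 / 2

/-- The Huber cost `c_{2,λ}`. -/
def huber (lam : ℝ) (x y : Ed d) : ℝ :=
  if ‖x - y‖ ≤ lam then ‖x - y‖ ^ 2 / 2 else lam * ‖x - y‖ - lam ^ 2 / 2

/-- The `c`-transform on `Ω`: `φ^c(x) = inf_{y ∈ Ω} c(x,y) - φ(y)`. -/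
def ctrans (c : Ed d → Ed d → ℝ) (Ω : Set (Ed d)) (φ : Ed d → ℝ) (x : Ed d) : ℝ :=
  sInf ((fun y => c x y - φ y) '' Ω)

/-- A Borel probability measure concentrated on `Ω`. -/
def ProbOn (Ω : Set (Ed d)) (μ : Measure (Ed d)) : Prop :=
  IsProbabilityMeasure μ ∧ μ Ωᶜ = 0

/-- `γ` is an optimal transport plan between `μ` and `ν` for cost `c`. -/
def IsOptimalPlan (c : Ed d → Ed d → ℝ) (μ ν : Measure (Ed d))
    (γ : Measure (Ed d × Ed d)) : Prop :=
  IsCoupling μ ν γ ∧ ∀ γ' : Measure (Ed d × Ed d), IsCoupling μ ν γ' →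
    ∫ p, c p.1 p.2 ∂γ ≤ ∫ p, c p.1 p.2 ∂γ'

/-- `T` is an optimal transport map from `μ` to `ν` for cost `c`. -/
def IsOptimalMap (c : Ed d → Ed d → ℝ) (μ ν : Measure (Ed d)) (T : Ed d → Ed d) : Prop :=
  AEMeasurable T μ ∧ μ.map T = ν ∧
    ∀ γ : Measure (Ed d × Ed d), IsCoupling μ ν γ →
      ∫ x, c x (T x) ∂μ ≤ ∫ p, c p.1 p.2 ∂γ

/-- The WROF functional `(1/2) W₂²(μ,ρ) + λ W₁(ρ,ν)`. -/
def wrof (lam : ℝ) (μ ν ρ : Measure (Ed d)) : ℝ := W2sq μ ρ / 2 + lam * W1 ρ ν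

/-- `ρ ∈ B_λ(μ)`: there exists an optimal plan for the Huber cost `c_{2,λ}` from `μ` to `ρ`
supported in `{|x-y| ≤ λ}`. -/
def Bset (lam : ℝ) (μ ρ : Measure (Ed d)) : Prop :=
  ∃ γ : Measure (Ed d × Ed d), IsOptimalPlan (huber lam) μ ρ γ ∧
    γ {p : Ed d × Ed d | lam < ‖p.1 - p.2‖} = 0

/-- `φ` solves the dual problem `sup_{φ ∈ λ-Lip(Ω)} ∫ φ^{c₂} dμ + ∫ φ dν`. -/
def DualSol (Ω : Set (Ed d)) (lam : ℝ) (μ ν : Measure (Ed d)) (φ : Ed d → ℝ) : Prop :=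
  LipschitzOnWith (Real.toNNReal lam) φ Ω ∧
    ∀ ψ : Ed d → ℝ, LipschitzOnWith (Real.toNNReal lam) ψ Ω →
      (∫ x, ctrans c2 Ω ψ x ∂μ) + ∫ x, ψ x ∂ν ≤ (∫ x, ctrans c2 Ω φ x ∂μ) + ∫ x, φ x ∂ν

/-- `φ ∈ ∂((1/2)W₂²(·,μ))(ρ)`, i.e. `φ ∈ C(Ω)` with `∫φ^{c₂}dμ + ∫φ dρ = (1/2)W₂²(ρ,μ)`. -/
def InSubdiffW2 (Ω : Set (Ed d)) (μ ρ : Measure (Ed d)) (φ : Ed d → ℝ) : Prop :=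
  ContinuousOn φ Ω ∧ (∫ x, ctrans c2 Ω φ x ∂μ) + ∫ x, φ x ∂ρ = W2sq ρ μ / 2

/-- The divergence `D_λ(ν,ρ)` with reference measure `μ`. -/
def Dlam (Ω : Set (Ed d)) (lam : ℝ) (μ ν ρ : Measure (Ed d)) : EReal :=
  ((W2sq ν μ / 2 : ℝ) : EReal) - ((W2sq ρ μ / 2 : ℝ) : EReal) -
    ⨆ φ ∈ {φ : Ed d → ℝ | InSubdiffW2 Ω μ ρ φ ∧ LipschitzOnWith (Real.toNNReal lam) φ Ω},
      (((∫ x, φ x ∂ν) - ∫ x, φ x ∂ρ : ℝ) : EReal)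

/-- `φ` is `c`-concave on `Ω`: `φ = ψ^c` for some `ψ`. -/
def CConcaveOn (c : Ed d → Ed d → ℝ) (Ω : Set (Ed d)) (φ : Ed d → ℝ) : Prop :=
  ∃ ψ : Ed d → ℝ, ∀ x ∈ Ω, φ x = ctrans c Ω ψ x

/-- The (topological) support of a measure. -/
def msupport {α : Type*} [TopologicalSpace α] [MeasurableSpace α] (γ : Measure α) : Set α :=
  {p | ∀ U : Set α, IsOpen U → p ∈ U → γ U ≠ 0}

/-- Integration of a real function against a finite signed Borel measure, via the Jordan
decomposition. -/
def sInt {d : ℕ} (ξ : SignedMeasure (Ed d)) (f : Ed d → ℝ) : ℝ :=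
  (∫ x, f x ∂ξ.toJordanDecomposition.posPart) - ∫ x, f x ∂ξ.toJordanDecomposition.negPart

/-- The subdifferential, at `φ ∈ C(Ω)`, of the functional `F(φ) = -∫ φ^{c₂} dμ` on `C(Ω)`,
with respect to the duality of `C(Ω)` with the finite signed Borel measures on `Ω`. -/
def subdiffC {d : ℕ} (Ω : Set (Ed d)) (μ : Measure (Ed d)) (φ : Ed d → ℝ) :
    Set (SignedMeasure (Ed d)) :=
  {ξ | ∀ ψ : Ed d → ℝ, ContinuousOn ψ Ω →
    (-∫ x, ctrans c2 Ω φ x ∂μ) + sInt ξ (fun x => ψ x - φ x) ≤ -∫ x, ctrans c2 Ω ψ x ∂μ}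


/-! ### Positive functionals on spaces of continuous functions -/

/-- Riesz-Markov-Kakutani on a compact Hausdorff space, for positive functionals on `C(X, ℝ)`. -/
lemma exists_measure_of_pos {X : Type*} [TopologicalSpace X] [CompactSpace X] [T2Space X]
    [MeasurableSpace X] [BorelSpace X] (L : C(X, ℝ) →ₗ[ℝ] ℝ) (hL : ∀ f, 0 ≤ f → 0 ≤ L f) :
    ∃ m : Measure X, IsFiniteMeasure m ∧ ∀ f : C(X, ℝ), ∫ x, f x ∂m = L f := by
  let L' : CompactlySupportedContinuousMap X ℝ →ₗ[ℝ] ℝ :=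
    { toFun := fun f => L f.toContinuousMap
      map_add' := fun f g => L.map_add f.toContinuousMap g.toContinuousMap
      map_smul' := fun r f => L.map_smul r f.toContinuousMap }
  let P : CompactlySupportedContinuousMap X ℝ →ₚ[ℝ] ℝ :=
    PositiveLinearMap.mk₀ L' (fun f hf => hL _ hf)
  refine ⟨RealRMK.rieszMeasure P, inferInstance, fun f => ?_⟩
  exact RealRMK.integral_rieszMeasure P ⟨f, HasCompactSupport.of_compactSpace _⟩

/-- Strong Kantorovich duality on a compact metric space, in the case where the dual problem is
attained: if `(a, b)` is a dual maximizer with value `W`, some coupling of `ρ` and `μ` has cost `W`. -/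
lemma exists_plan {X : Type*} [MetricSpace X] [CompactSpace X]
    [MeasurableSpace X] [BorelSpace X] (μ ρ : Measure X) [IsProbabilityMeasure μ]
    [IsProbabilityMeasure ρ] (c : C(X × X, ℝ)) (W : ℝ) (a b : C(X, ℝ))
    (hab : ∀ x y, a x + b y ≤ c (x, y)) (hW : ∫ x, a x ∂ρ + ∫ x, b x ∂μ = W)
    (hmax : ∀ u v : C(X, ℝ), (∀ x y, u x + v y ≤ c (x, y)) →
      ∫ x, u x ∂ρ + ∫ x, v x ∂μ ≤ W) :
    ∃ γ : Measure (X × X), γ.map Prod.fst = ρ ∧ γ.map Prod.snd = μ ∧ ∫ p, c p ∂γ = W := by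
  have hi : ∀ (m : Measure X) [IsProbabilityMeasure m] (f : C(X, ℝ)), Integrable f m :=
    fun m _ f => f.continuous.integrable_of_hasCompactSupport (HasCompactSupport.of_compactSpace _)
  -- `J (u, v, t) = u ⊕ v + t c`
  let J : (C(X, ℝ) × C(X, ℝ) × ℝ) →ₗ[ℝ] C(X × X, ℝ) :=
    { toFun := fun w => w.1.comp ⟨Prod.fst, continuous_fst⟩ + w.2.1.comp ⟨Prod.snd, continuous_snd⟩
        + w.2.2 • c
      map_add' := fun w z => by ext; simp; ring
      map_smul' := fun r w => by ext; simp; ring }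
  have hJ : ∀ w x y, J w (x, y) = w.1 x + w.2.1 y + w.2.2 * c (x, y) := fun w x y => rfl
  let f0 : (C(X, ℝ) × C(X, ℝ) × ℝ) →ₗ[ℝ] ℝ :=
    { toFun := fun w => ∫ x, w.1 x ∂ρ + ∫ x, w.2.1 x ∂μ + w.2.2 * W
      map_add' := fun w z => by
        simp only [Prod.fst_add, Prod.snd_add, ContinuousMap.add_apply]
        rw [integral_add (hi _ _) (hi _ _), integral_add (hi _ _) (hi _ _)]; ring
      map_smul' := fun r w => by
        simp only [Prod.smul_fst, Prod.smul_snd, ContinuousMap.smul_apply, smul_eq_mul,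
          integral_const_mul, RingHom.id_apply]; ring }
  have hf0 : ∀ w, f0 w = ∫ x, w.1 x ∂ρ + ∫ x, w.2.1 x ∂μ + w.2.2 * W := fun w => rfl
  -- The extension takes place on `(C(X) × C(X) × ℝ) × C(X × X)` rather than on `C(X × X)`, since
  -- distinct triples may have the same image under `J`: this way no partial inverse of `J` is
  -- needed. That the extension depends only on `J w + h` follows from positivity (`hg2` below).
  let s : PointedCone ℝ ((C(X, ℝ) × C(X, ℝ) × ℝ) × C(X × X, ℝ)) :=
    { carrier := {p | ∀ z, 0 ≤ J p.1 z + p.2 z}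
      zero_mem' := by intro z; simp
      add_mem' := by
        intro p q hp hq z
        have := hp z; have := hq z
        simp only [Prod.fst_add, Prod.snd_add, map_add, ContinuousMap.add_apply]; linarith
      smul_mem' := by
        intro r p hp z
        have h := mul_nonneg r.2 (hp z)
        have e : J (r • p).1 z + (r • p).2 z = r.1 * (J p.1 z + p.2 z) := by
          have : (r • p).1 = r.1 • p.1 := rfl
          rw [this, map_smul]
          have : (r • p).2 = r.1 • p.2 := rfl
          rw [this]
          simp only [ContinuousMap.smul_apply, smul_eq_mul]; ring
        change 0 ≤ J (r • p).1 z + (r • p).2 z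
        rw [e]; exact h }
  let f : ((C(X, ℝ) × C(X, ℝ) × ℝ) × C(X × X, ℝ)) →ₗ.[ℝ] ℝ :=
    { domain := (⊤ : Submodule ℝ (C(X, ℝ) × C(X, ℝ) × ℝ)).prod ⊥
      toFun := f0 ∘ₗ LinearMap.fst ℝ _ _ ∘ₗ Submodule.subtype _ }
  -- positivity of `f0` on nonnegative functions of the form `u ⊕ v + t c`
  have key0 : ∀ u v : C(X, ℝ), (∀ x y, 0 ≤ u x + v y) → 0 ≤ ∫ x, u x ∂ρ + ∫ x, v x ∂μ := by
    intro u v h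
    have h1 : ∀ y, 0 ≤ ∫ x, u x ∂ρ + v y := by
      intro y
      have : 0 ≤ ∫ x, (u x + v y) ∂ρ := integral_nonneg fun x => h x y
      rwa [integral_add (hi _ _) (integrable_const _), integral_const, probReal_univ,
        one_smul] at this
    have : 0 ≤ ∫ y, (∫ x, u x ∂ρ + v y) ∂μ := integral_nonneg h1
    rwa [integral_add (integrable_const _) (hi _ _), integral_const, probReal_univ,
        one_smul] at this
  have key : ∀ w, (∀ z, 0 ≤ J w z) → 0 ≤ f0 w := by
    rintro ⟨u, v, t⟩ h
    have h' : ∀ x y, 0 ≤ u x + v y + t * c (x, y) := fun x y => h (x, y)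
    rw [hf0]
    simp only
    -- for `t ≤ 0` bound `t c` by `t (a ⊕ b)`; for `t > 0` the pair `-(u, v) / t` is admissible
    rcases le_or_gt t 0 with ht | ht
    · have := key0 (u + t • a) (v + t • b) (fun x y => by
        have h1 := mul_le_mul_of_nonpos_left (hab x y) ht
        have h2 := h' x y
        simp only [ContinuousMap.add_apply, ContinuousMap.smul_apply, smul_eq_mul]
        linarith)
      simp only [ContinuousMap.add_apply] at this
      rw [integral_add (hi _ _) (hi _ _), integral_add (hi _ _) (hi _ _)] at this
      simp only [ContinuousMap.smul_apply, smul_eq_mul, integral_const_mul] at this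
      rw [← hW]; linarith
    · have := hmax ((-t⁻¹) • u) ((-t⁻¹) • v) (fun x y => by
        have h2 := mul_nonneg (inv_pos.2 ht).le (h' x y)
        simp only [ContinuousMap.smul_apply, smul_eq_mul]
        have : t⁻¹ * (u x + v y + t * c (x, y)) = t⁻¹ * u x + t⁻¹ * v y + c (x, y) := by
          field_simp
        linarith)
      simp only [ContinuousMap.smul_apply, smul_eq_mul, integral_const_mul] at this
      have h3 := mul_le_mul_of_nonneg_left this ht.le
      have : t * (-t⁻¹ * ∫ x, u x ∂ρ + -t⁻¹ * ∫ x, v x ∂μ) = -(∫ x, u x ∂ρ + ∫ x, v x ∂μ) := by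
        field_simp; ring
      linarith
  obtain ⟨g, hg, hgs⟩ := riesz_extension s f
    (by
      rintro ⟨⟨w, h⟩, hx⟩ hp
      obtain rfl : h = 0 := by simpa [f] using hx
      apply key w
      intro z; simpa using hp z)
    (by
      rintro ⟨w, h⟩
      refine ⟨⟨(-w + (ContinuousMap.const X ‖h‖, 0, 0), 0), by simp [f]⟩, ?_⟩
      rintro ⟨x, y⟩
      have := h.norm_coe_le_norm (x, y)
      rw [Real.norm_eq_abs] at this
      have := neg_abs_le (h (x, y))
      simp only [hJ]
      simp
      linarith)
  have hg1 : ∀ w, g (w, 0) = f0 w := fun w => hg ⟨(w, 0), by simp [f]⟩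
  have hg2 : ∀ w, g (0, J w) = f0 w := by
    intro w
    have e1 : 0 ≤ g (w, - J w) := hgs _ (fun z => by simp)
    have e2 : 0 ≤ g (-w, J w) := hgs _ (fun z => by simp)
    have e3 : (w, - J w) = ((w, 0) : ((C(X, ℝ) × C(X, ℝ) × ℝ) × C(X × X, ℝ))) - (0, J w) := by simp
    have e4 : (-w, J w) = -((w, 0) : ((C(X, ℝ) × C(X, ℝ) × ℝ) × C(X × X, ℝ))) + (0, J w) := by simp
    rw [e3, map_sub, hg1] at e1
    rw [e4, map_add, map_neg, hg1] at e2
    linarith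
  obtain ⟨γ, hγf, hγ⟩ := exists_measure_of_pos (g ∘ₗ LinearMap.inr ℝ _ _) (fun h hh =>
    hgs _ (fun z => by simpa using hh z))
  have hγ2 : ∀ w, ∫ p, J w p ∂γ = f0 w := fun w => by rw [hγ]; exact hg2 w
  refine ⟨γ, ?_, ?_, ?_⟩
  · refine ext_of_forall_integral_eq_of_IsFiniteMeasure fun u => ?_
    rw [integral_map measurable_fst.aemeasurable u.continuous.aestronglyMeasurable]
    simpa [J, f0] using hγ2 (u.toContinuousMap, 0, 0)
  · refine ext_of_forall_integral_eq_of_IsFiniteMeasure fun u => ?_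
    rw [integral_map measurable_snd.aemeasurable u.continuous.aestronglyMeasurable]
    simpa [J, f0] using hγ2 (0, u.toContinuousMap, 0)
  · simpa [J, f0] using hγ2 (0, 0, 1)

lemma continuous_infc {X Y : Type*} [TopologicalSpace X] [CompactSpace X] [TopologicalSpace Y]
    (f : Y → X → ℝ) (hf : Continuous (Function.uncurry f)) :
    Continuous fun x => ⨅ y, f x y := by
  have := isCompact_univ.continuous_sInf (f := f) hf
  simpa [Set.image_univ, sInf_range] using this

lemma bdd_of_compact {X : Type*} [TopologicalSpace X] [CompactSpace X] (f : X → ℝ)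
    (hf : Continuous f) : BddBelow (Set.range f) :=
  (isCompact_range hf).bddBelow

/-- The convex functional `ψ ↦ -∫ inf_y (c(x,y) - ψ(y)) dμ(x)` on `C(X)` has at each `φ` a
subgradient given by a finite positive measure. -/
lemma exists_subgradient {X : Type*} [MetricSpace X] [CompactSpace X] [Nonempty X]
    [MeasurableSpace X] [BorelSpace X] (μ : Measure X) [IsProbabilityMeasure μ]
    (c : C(X × X, ℝ)) (φ : C(X, ℝ)) :
    ∃ ρ : Measure X, IsFiniteMeasure ρ ∧ ∀ ψ : C(X, ℝ),
      (-∫ x, (⨅ y, c (x, y) - φ y) ∂μ) + ∫ y, (ψ y - φ y) ∂ρ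
        ≤ -∫ x, (⨅ y, c (x, y) - ψ y) ∂μ := by
  let I : ℝ × C(X, ℝ) → X → ℝ := fun p x => ⨅ y, p.1 * c (x, y) - p.2 y
  have hc2 : ∀ p : ℝ × C(X, ℝ), Continuous (Function.uncurry fun x y => p.1 * c (x, y) - p.2 y) := by
    intro p; simp only [Function.uncurry_def]; fun_prop
  have hIc : ∀ p, Continuous (I p) := fun p => continuous_infc _ (hc2 p)
  have hIi : ∀ p, Integrable (I p) μ := fun p =>
    (hIc p).integrable_of_hasCompactSupport (HasCompactSupport.of_compactSpace _)
  have hb : ∀ (p : ℝ × C(X, ℝ)) x, BddBelow (Set.range fun y => p.1 * c (x, y) - p.2 y) :=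
    fun p x => bdd_of_compact _ (by fun_prop)
  -- `N` is sublinear and `N (1, ψ)` is the functional at `ψ`
  let N : ℝ × C(X, ℝ) → ℝ := fun p => -∫ x, I p x ∂μ
  have Nhom : ∀ r : ℝ, 0 < r → ∀ p, N (r • p) = r * N p := by
    intro r hr p
    have : ∀ x, I (r • p) x = r * I p x := by
      intro x
      simp only [I]
      rw [Real.mul_iInf_of_nonneg hr.le]
      congr 1; ext y; simp; ring
    simp only [N, this, integral_const_mul]; ring
  have Nadd : ∀ p q, N (p + q) ≤ N p + N q := by
    intro p q
    have : ∀ x, I p x + I q x ≤ I (p + q) x := by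
      intro x
      refine le_ciInf fun y => ?_
      have h1 := ciInf_le (hb p x) y
      have h2 := ciInf_le (hb q x) y
      simp only [I, Prod.fst_add, Prod.snd_add, ContinuousMap.add_apply]
      linarith
    have := integral_mono ((hIi p).add (hIi q)) (hIi (p + q)) this
    simp only [Pi.add_apply] at this
    rw [integral_add (hIi p) (hIi q)] at this
    simp only [N]; linarith
  have N0 : N 0 = 0 := by simp [N, I]
  have hne : ((1, φ) : ℝ × C(X, ℝ)) ≠ 0 := by simp [Prod.ext_iff]
  -- a linear `g ≤ N` with equality at `(1, φ)` restricts to a subgradient on `{0} × C(X)`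
  obtain ⟨g, hg, hgN⟩ := exists_extension_of_le_sublinear
    (LinearPMap.mkSpanSingleton ((1, φ) : ℝ × C(X, ℝ)) (N (1, φ)) hne) N Nhom Nadd (by
      rintro ⟨x, hx⟩
      obtain ⟨t, rfl⟩ := Submodule.mem_span_singleton.1 hx
      refine (le_of_eq (LinearPMap.mkSpanSingleton'_apply _ _ _ t hx)).trans ?_
      simp only [smul_eq_mul, RingHom.id_apply]
      rcases lt_trichotomy t 0 with ht | rfl | ht
      · have h1 := Nadd (t • (1, φ)) ((-t) • (1, φ))
        rw [← add_smul, add_neg_cancel, zero_smul, N0, Nhom (-t) (by linarith)] at h1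
        linarith
      · simp [N0]
      · rw [Nhom t ht])
  have hgφ : g (1, φ) = N (1, φ) := by
    have := hg ⟨(1, φ), Submodule.mem_span_singleton_self _⟩
    rw [this]
    exact LinearPMap.mkSpanSingleton_apply ..
  obtain ⟨ρ, hρf, hρ⟩ := exists_measure_of_pos (g ∘ₗ LinearMap.inr ℝ _ _) (fun h hh => by
    have h1 := hgN (0, -h)
    have h2 : N (0, -h) ≤ 0 := by
      have : 0 ≤ ∫ x, I (0, -h) x ∂μ := integral_nonneg fun x =>
        Real.iInf_nonneg fun y => by simpa using hh y
      simp only [N]; linarith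
    have h3 : ((0, -h) : ℝ × C(X, ℝ)) = -(0, h) := by simp
    rw [h3, map_neg] at h1
    rw [h3] at h2
    simp only [LinearMap.coe_comp, Function.comp_apply, LinearMap.coe_inr]
    linarith)
  refine ⟨ρ, hρf, fun ψ => ?_⟩
  have h1 := hρ (ψ - φ)
  have h2 := hgN (1, ψ)
  have h3 : ((1, ψ) : ℝ × C(X, ℝ)) = (1, φ) + (0, ψ - φ) := by simp
  rw [h3, map_add, hgφ, ← h3] at h2
  simp only [ContinuousMap.sub_apply, LinearMap.coe_comp, Function.comp_apply,
    LinearMap.coe_inr] at h1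
  rw [h1]
  simpa [N, I] using h2

section Concrete

variable {Ω : Set (Ed d)}

/-! ### The `c₂`-transform -/

lemma continuous_c2 : Continuous (fun p : Ed d × Ed d => c2 p.1 p.2) := by
  unfold c2; fun_prop

lemma c2_comm (x y : Ed d) : c2 x y = c2 y x := by
  unfold c2; rw [norm_sub_rev]

lemma ctrans_eq_iInf (c : Ed d → Ed d → ℝ) (Ω : Set (Ed d)) (ψ : Ed d → ℝ) (x : Ed d) :
    ctrans c Ω ψ x = ⨅ y : Ω, c x y - ψ y := sInf_image'

lemma ctrans_congr {ψ ψ' : Ed d → ℝ} (h : Set.EqOn ψ ψ' Ω) (x : Ed d) :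
    ctrans c2 Ω ψ x = ctrans c2 Ω ψ' x := by
  unfold ctrans
  congr 1
  exact Set.image_congr fun y hy => by rw [h hy]

lemma continuousOn_c2_sub {ψ : Ed d → ℝ} (hψ : ContinuousOn ψ Ω) (x : Ed d) :
    ContinuousOn (fun y => c2 x y - ψ y) Ω := by
  refine ContinuousOn.sub ?_ hψ
  unfold c2; fun_prop

lemma ctrans_add_le (hΩ : IsCompact Ω) {ψ : Ed d → ℝ} (hψ : ContinuousOn ψ Ω) (x : Ed d)
    {y : Ed d} (hy : y ∈ Ω) : ctrans c2 Ω ψ x + ψ y ≤ c2 x y := by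
  have : ctrans c2 Ω ψ x ≤ c2 x y - ψ y :=
    csInf_le (hΩ.bddBelow_image (continuousOn_c2_sub hψ x)) ⟨y, hy, rfl⟩
  linarith

lemma le_ctrans (hne : Ω.Nonempty) {ψ : Ed d → ℝ} {x : Ed d} {a : ℝ}
    (h : ∀ y ∈ Ω, a + ψ y ≤ c2 x y) : a ≤ ctrans c2 Ω ψ x := by
  refine le_csInf (hne.image _) ?_
  rintro _ ⟨y, hy, rfl⟩
  have := h y hy
  simp only; linarith

lemma continuous_ctrans (hΩ : IsCompact Ω) {ψ : Ed d → ℝ} (hψ : ContinuousOn ψ Ω) :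
    Continuous (ctrans c2 Ω ψ) := by
  have : CompactSpace Ω := isCompact_iff_compactSpace.1 hΩ
  have h : Continuous fun x : Ed d => ⨅ y : Ω, c2 x (y : Ed d) - ψ y := by
    refine continuous_infc (fun (x : Ed d) (y : Ω) => c2 x (y : Ed d) - ψ y) ?_
    have := continuousOn_iff_continuous_domRestrict.1 hψ
    have h2 : Continuous fun p : Ed d × Ω => c2 p.1 p.2 - Ω.domRestrict ψ p.2 := by
      unfold c2; fun_prop
    exact h2
  have e : ctrans c2 Ω ψ = fun x => ⨅ y : Ω, c2 x (y : Ed d) - ψ y := funext fun x => sInf_image'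
  rw [e]; exact h

/-! ### Measures concentrated on `Ω`, couplings and duality -/

lemma ae_mem_of_probOn {m : Measure (Ed d)} (hm : m Ωᶜ = 0) : ∀ᵐ x ∂m, x ∈ Ω := hm

lemma integrable_of_concentrated (hΩ : IsCompact Ω) {m : Measure (Ed d)} [IsFiniteMeasure m]
    (hm : m Ωᶜ = 0) {f : Ed d → ℝ} (hf : ContinuousOn f Ω) : Integrable f m := by
  have := hf.integrableOn_compact (μ := m) hΩ
  rwa [IntegrableOn, Measure.restrict_eq_self_of_ae_mem (ae_mem_of_probOn hm)] at this

lemma integral_comap_of_concentrated (hΩ : IsCompact Ω) {m : Measure (Ed d)}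
    (hm : m Ωᶜ = 0) (f : Ed d → ℝ) :
    ∫ x : Ω, f x ∂(m.comap Subtype.val) = ∫ x, f x ∂m := by
  rw [integral_subtype_comap hΩ.measurableSet,
    Measure.restrict_eq_self_of_ae_mem (ae_mem_of_probOn hm)]

lemma map_comap_of_concentrated (hΩ : IsCompact Ω) {m : Measure (Ed d)} (hm : m Ωᶜ = 0) :
    (m.comap (Subtype.val : Ω → Ed d)).map Subtype.val = m := by
  rw [map_comap_subtype_coe hΩ.measurableSet,
    Measure.restrict_eq_self_of_ae_mem (ae_mem_of_probOn hm)]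

lemma isProb_comap (hΩ : IsCompact Ω) {m : Measure (Ed d)} (hm : ProbOn Ω m) :
    IsProbabilityMeasure (m.comap (Subtype.val : Ω → Ed d)) := by
  have := hm.1
  have h := map_comap_of_concentrated hΩ hm.2
  constructor
  have h1 : (m.comap (Subtype.val : Ω → Ed d)).map Subtype.val Set.univ = 1 := by
    rw [h]; exact measure_univ
  rwa [Measure.map_apply measurable_subtype_coe MeasurableSet.univ, Set.preimage_univ] at h1

lemma coupling_facts (hΩ : IsCompact Ω) {ρ μ : Measure (Ed d)} (hρ : ProbOn Ω ρ)
    (hμ : ProbOn Ω μ) {γ : Measure (Ed d × Ed d)} (hγ : IsCoupling ρ μ γ) :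
    (∀ᵐ p ∂γ, p.1 ∈ Ω ∧ p.2 ∈ Ω) ∧ Integrable (fun p : Ed d × Ed d => c2 p.1 p.2) γ := by
  have := hρ.1
  have h1 : ∀ᵐ p ∂γ, p.1 ∈ Ω := by
    refine ae_of_ae_map (p := fun x => x ∈ Ω) measurable_fst.aemeasurable ?_
    rw [hγ.1]; exact hρ.2
  have h2 : ∀ᵐ p ∂γ, p.2 ∈ Ω := by
    refine ae_of_ae_map (p := fun x => x ∈ Ω) measurable_snd.aemeasurable ?_
    rw [hγ.2]; exact hμ.2
  have h3 : ∀ᵐ p ∂γ, p ∈ Ω ×ˢ Ω := by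
    filter_upwards [h1, h2] with p hp hq using ⟨hp, hq⟩
  have hf : IsFiniteMeasure γ := by
    constructor
    have : γ.map Prod.fst Set.univ < ⊤ := by rw [hγ.1]; exact measure_lt_top _ _
    rwa [Measure.map_apply measurable_fst MeasurableSet.univ, Set.preimage_univ] at this
  refine ⟨h3, ?_⟩
  have := (continuous_c2 (d := d)).continuousOn.integrableOn_compact (μ := γ) (hΩ.prod hΩ)
  rwa [IntegrableOn, Measure.restrict_eq_self_of_ae_mem h3] at this

/-- The defect `c₂(x,y) - ψ^{c₂}(y) - ψ(x)` is nonnegative, and its integral against a coupling is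
the duality gap between that coupling and `ψ`. -/
lemma integral_defect (hΩ : IsCompact Ω) {ρ μ : Measure (Ed d)} (hρ : ProbOn Ω ρ)
    (hμ : ProbOn Ω μ) {γ : Measure (Ed d × Ed d)} (hγ : IsCoupling ρ μ γ)
    {ψ : Ed d → ℝ} (hψ : ContinuousOn ψ Ω) :
    (∀ᵐ p ∂γ, 0 ≤ c2 p.1 p.2 - (ctrans c2 Ω ψ p.2 + ψ p.1)) ∧
    Integrable (fun p : Ed d × Ed d => c2 p.1 p.2 - (ctrans c2 Ω ψ p.2 + ψ p.1)) γ ∧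
    ∫ p, (c2 p.1 p.2 - (ctrans c2 Ω ψ p.2 + ψ p.1)) ∂γ
      = ∫ p, c2 p.1 p.2 ∂γ - ((∫ x, ctrans c2 Ω ψ x ∂μ) + ∫ x, ψ x ∂ρ) := by
  have := hρ.1
  have := hμ.1
  obtain ⟨h1, h2⟩ := coupling_facts hΩ hρ hμ hγ
  have i1 : Integrable ψ (γ.map Prod.fst) := by
    rw [hγ.1]; exact integrable_of_concentrated hΩ hρ.2 hψ
  have i2 : Integrable (ctrans c2 Ω ψ) (γ.map Prod.snd) := by
    rw [hγ.2]; exact integrable_of_concentrated hΩ hμ.2 (continuous_ctrans hΩ hψ).continuousOn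
  have j1 : Integrable (fun p : Ed d × Ed d => ψ p.1) γ := i1.comp_measurable measurable_fst
  have j2 : Integrable (fun p : Ed d × Ed d => ctrans c2 Ω ψ p.2) γ :=
    i2.comp_measurable measurable_snd
  refine ⟨?_, h2.sub (j2.add j1), ?_⟩
  · filter_upwards [h1] with p hp
    have := ctrans_add_le hΩ hψ p.2 hp.1
    rw [c2_comm] at this
    linarith
  · have e : ∫ p, (c2 p.1 p.2 - (ctrans c2 Ω ψ p.2 + ψ p.1)) ∂γ = ∫ p, c2 p.1 p.2 ∂γ
        - ∫ p, (ctrans c2 Ω ψ p.2 + ψ p.1) ∂γ := integral_sub h2 (j2.add j1)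
    rw [e, integral_add j2 j1]
    rw [← integral_map measurable_fst.aemeasurable i1.aestronglyMeasurable,
      ← integral_map measurable_snd.aemeasurable i2.aestronglyMeasurable, hγ.1, hγ.2]

/-- Weak duality. -/
lemma W2sq_half_le (hΩ : IsCompact Ω) {ρ μ : Measure (Ed d)} (hρ : ProbOn Ω ρ)
    (hμ : ProbOn Ω μ) {ψ : Ed d → ℝ} (hψ : ContinuousOn ψ Ω) :
    (∫ x, ctrans c2 Ω ψ x ∂μ) + ∫ x, ψ x ∂ρ ≤ W2sq ρ μ / 2 := by
  have := hρ.1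
  have := hμ.1
  rw [le_div_iff₀ two_pos]
  refine le_csInf ⟨_, ρ.prod μ, ⟨?_, ?_⟩, rfl⟩ ?_
  · simp
  · simp
  · rintro _ ⟨γ, hγ, rfl⟩
    obtain ⟨h1, h2, h3⟩ := integral_defect hΩ hρ hμ hγ hψ
    have h4 := integral_nonneg_of_ae h1
    have h5 : ∫ p, c2 p.1 p.2 ∂γ = (∫ p, ‖p.1 - p.2‖ ^ 2 ∂γ) / 2 := by
      simp only [c2, integral_div]
    linarith

lemma W2sq_le {ρ μ : Measure (Ed d)} {γ : Measure (Ed d × Ed d)} (hγ : IsCoupling ρ μ γ) :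
    W2sq ρ μ / 2 ≤ ∫ p, c2 p.1 p.2 ∂γ := by
  have h5 : ∫ p, c2 p.1 p.2 ∂γ = (∫ p, ‖p.1 - p.2‖ ^ 2 ∂γ) / 2 := by
    simp only [c2, integral_div]
  rw [h5]
  refine div_le_div_of_nonneg_right ?_ two_pos.le
  refine csInf_le ⟨0, ?_⟩ ⟨γ, hγ, rfl⟩
  rintro _ ⟨γ', -, rfl⟩
  exact integral_nonneg fun p => by positivity

/-- If `φ` maximizes the dual functional, there is a coupling whose cost is the dual value at `φ`;
this is `exists_plan` on the compact space `Ω`. -/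
lemma exists_plan_of_dual_max (hΩ : IsCompact Ω) (hne : Ω.Nonempty) {ρ μ : Measure (Ed d)}
    (hρ : ProbOn Ω ρ) (hμ : ProbOn Ω μ) {φ : Ed d → ℝ} (hφ : ContinuousOn φ Ω)
    (hmax : ∀ ψ : Ed d → ℝ, ContinuousOn ψ Ω →
      (∫ x, ctrans c2 Ω ψ x ∂μ) + ∫ x, ψ x ∂ρ ≤ (∫ x, ctrans c2 Ω φ x ∂μ) + ∫ x, φ x ∂ρ) :
    ∃ γ, IsCoupling ρ μ γ ∧
      ∫ p, c2 p.1 p.2 ∂γ = (∫ x, ctrans c2 Ω φ x ∂μ) + ∫ x, φ x ∂ρ := by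
  have : CompactSpace Ω := isCompact_iff_compactSpace.1 hΩ
  have := isProb_comap hΩ hρ
  have := isProb_comap hΩ hμ
  have := hμ.1
  let c : C(Ω × Ω, ℝ) := ⟨fun p => c2 (p.1 : Ed d) p.2, by
    have := continuous_c2 (d := d); fun_prop⟩
  obtain ⟨γ, h1, h2, h3⟩ := exists_plan (μ.comap (Subtype.val : Ω → Ed d))
    (ρ.comap (Subtype.val : Ω → Ed d)) c
    ((∫ x, ctrans c2 Ω φ x ∂μ) + ∫ x, φ x ∂ρ)
    ⟨Ω.domRestrict φ, continuousOn_iff_continuous_domRestrict.1 hφ⟩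
    ⟨fun x => ctrans c2 Ω φ x, (continuous_ctrans hΩ hφ).comp continuous_subtype_val⟩
    (fun x y => by
      have := ctrans_add_le hΩ hφ y x.2
      rw [c2_comm] at this
      simp only [ContinuousMap.coe_mk, Set.domRestrict_apply, c]; linarith)
    (by
      have e1 := integral_comap_of_concentrated hΩ hρ.2 φ
      have e2 := integral_comap_of_concentrated hΩ hμ.2 (ctrans c2 Ω φ)
      simp only [ContinuousMap.coe_mk, Set.domRestrict_apply]
      rw [e1, e2, add_comm])
    (fun u v huv => by
      -- an admissible `(u, v)` is dominated by `(u, u^{c₂})`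
      let ψ : Ed d → ℝ := Function.extend Subtype.val u 0
      have hu : ∀ x : Ω, ψ x = u x := fun x => Subtype.val_injective.extend_apply _ _ x
      have hψ : ContinuousOn ψ Ω := by
        rw [continuousOn_iff_continuous_domRestrict]
        have : Ω.domRestrict ψ = u := funext hu
        rw [this]; exact u.continuous
      have e1 := integral_comap_of_concentrated hΩ hρ.2 ψ
      have e2 := integral_comap_of_concentrated hΩ hμ.2 (ctrans c2 Ω ψ)
      have hm := hmax ψ hψ
      rw [← e1, ← e2] at hm
      simp only [hu] at hm
      have : ∫ y, v y ∂(μ.comap (Subtype.val : Ω → Ed d))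
          ≤ ∫ y : Ω, ctrans c2 Ω ψ y ∂(μ.comap (Subtype.val : Ω → Ed d)) := by
        refine integral_mono
          (v.continuous.integrable_of_hasCompactSupport (HasCompactSupport.of_compactSpace _))
          (((continuous_ctrans hΩ hψ).comp
            continuous_subtype_val).integrable_of_hasCompactSupport
            (HasCompactSupport.of_compactSpace _)) fun y => ?_
        refine le_ctrans hne fun x hx => ?_
        have := huv ⟨x, hx⟩ y
        have h' := hu ⟨x, hx⟩
        simp only [ContinuousMap.coe_mk, c] at this h'
        rw [c2_comm, h']; linarith
      linarith)
  refine ⟨γ.map (Prod.map Subtype.val Subtype.val), ⟨?_, ?_⟩, ?_⟩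
  · rw [Measure.map_map measurable_fst (by fun_prop)]
    have : (Prod.fst ∘ Prod.map Subtype.val Subtype.val : Ω × Ω → Ed d)
      = Subtype.val ∘ Prod.fst := rfl
    rw [this, ← Measure.map_map measurable_subtype_coe measurable_fst, h1,
      map_comap_of_concentrated hΩ hρ.2]
  · rw [Measure.map_map measurable_snd (by fun_prop)]
    have : (Prod.snd ∘ Prod.map Subtype.val Subtype.val : Ω × Ω → Ed d)
      = Subtype.val ∘ Prod.snd := rfl
    rw [this, ← Measure.map_map measurable_subtype_coe measurable_snd, h2,
      map_comap_of_concentrated hΩ hμ.2]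
  · rw [integral_map (by fun_prop) continuous_c2.aestronglyMeasurable]
    exact h3

/-! ### Signed measures and the subdifferential -/

lemma sInt_toSignedMeasure (ρ : Measure (Ed d)) [IsFiniteMeasure ρ] (f : Ed d → ℝ) :
    sInt ρ.toSignedMeasure f = ∫ x, f x ∂ρ := by
  let j : JordanDecomposition (Ed d) := ⟨ρ, 0, Measure.MutuallySingular.zero_right⟩
  have h : j.toSignedMeasure = ρ.toSignedMeasure := by
    simp [JordanDecomposition.toSignedMeasure, j]
  rw [sInt, ← h, JordanDecomposition.toJordanDecomposition_toSignedMeasure]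
  simp [j]

lemma eq_toSignedMeasure_iff (ρ : Measure (Ed d)) [IsFiniteMeasure ρ] (ξ : SignedMeasure (Ed d)) :
    (∀ s, MeasurableSet s → ξ s = (ρ s).toReal) ↔ ξ = ρ.toSignedMeasure := by
  constructor
  · intro h
    ext s hs
    rw [h s hs, Measure.toSignedMeasure_apply_measurable hs]; rfl
  · rintro rfl s hs
    rw [Measure.toSignedMeasure_apply_measurable hs]; rfl

/-- A signed measure with nonnegative integrals against nonnegative bounded continuous functions is
a positive measure: approximating closed sets gives `ξ⁻ F ≤ ξ⁺ F` for `F` closed, and inner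
regularity carries this to the Hahn set where `ξ⁺` vanishes. -/
lemma negPart_eq_zero_of_sInt_nonneg (ξ : SignedMeasure (Ed d))
    (h : ∀ f : BoundedContinuousFunction (Ed d) NNReal, 0 ≤ sInt ξ (fun x => (f x : ℝ))) :
    ξ.toJordanDecomposition.negPart = 0 := by
  set j := ξ.toJordanDecomposition
  have := j.posPart_finite
  have := j.negPart_finite
  have hcl : ∀ F : Set (Ed d), IsClosed F → j.negPart F ≤ j.posPart F := by
    intro F hF
    refine le_of_tendsto_of_tendsto' (HasOuterApproxClosed.tendsto_lintegral_apprSeq hF j.negPart)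
      (HasOuterApproxClosed.tendsto_lintegral_apprSeq hF j.posPart) fun n => ?_
    have h1 := h (hF.apprSeq n)
    rw [sInt, ← BoundedContinuousFunction.toReal_lintegral_coe_eq_integral,
      ← BoundedContinuousFunction.toReal_lintegral_coe_eq_integral, sub_nonneg] at h1
    exact (ENNReal.toReal_le_toReal
      (BoundedContinuousFunction.lintegral_lt_top_of_nnreal _ _).ne
      (BoundedContinuousFunction.lintegral_lt_top_of_nnreal _ _).ne).1 h1
  obtain ⟨A, hA, hp, hn⟩ := j.mutuallySingular
  have hA0 : j.negPart A = 0 := by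
    rw [hA.measure_eq_iSup_isClosed_of_ne_top (measure_ne_top _ _)]
    simp only [ENNReal.iSup_eq_zero]
    intro F hFA hF
    exact le_antisymm ((hcl F hF).trans ((measure_mono hFA).trans hp.le)) zero_le
  rw [← Measure.measure_univ_eq_zero, ← Set.union_compl_self A]
  exact measure_union_null hA0 hn

/-- Elements of the subdifferential are probability measures on `Ω`. -/
lemma probOn_of_mem_subdiffC (hΩ : IsCompact Ω) (hne : Ω.Nonempty) {μ : Measure (Ed d)}
    (hμ : ProbOn Ω μ) {φ : Ed d → ℝ} (hφ : ContinuousOn φ Ω) {ξ : SignedMeasure (Ed d)}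
    (hξ : ξ ∈ subdiffC Ω μ φ) :
    ∃ (ρ : Measure (Ed d)) (_ : IsFiniteMeasure ρ), ProbOn Ω ρ ∧ ξ = ρ.toSignedMeasure := by
  have := hμ.1
  set j := ξ.toJordanDecomposition with hj
  have := j.posPart_finite
  have hInt : ∀ ψ, ContinuousOn ψ Ω → Integrable (ctrans c2 Ω ψ) μ := fun ψ hψ =>
    integrable_of_concentrated hΩ hμ.2 (continuous_ctrans hΩ hψ).continuousOn
  -- positivity: the competitors `φ - f` with `f ≥ 0`
  have hneg : j.negPart = 0 := by
    refine negPart_eq_zero_of_sInt_nonneg ξ fun f => ?_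
    have hc : ContinuousOn (fun x => φ x - f x) Ω :=
      hφ.sub (NNReal.continuous_coe.comp f.continuous).continuousOn
    have h1 := hξ (fun x => φ x - f x) hc
    have h2 : ∫ x, ctrans c2 Ω φ x ∂μ ≤ ∫ x, ctrans c2 Ω (fun x => φ x - f x) x ∂μ := by
      refine integral_mono (hInt _ hφ) (hInt _ hc) fun x => ?_
      refine le_ctrans hne fun y hy => ?_
      have := ctrans_add_le hΩ hφ x hy
      have := (f y).2
      simp only [NNReal.val_eq_coe] at this
      linarith
    have h3 : sInt ξ (fun x => φ x - f x - φ x) = - sInt ξ (fun x => (f x : ℝ)) := by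
      have : (fun x => φ x - (f x : ℝ) - φ x) = fun x => -(f x : ℝ) := by ext; ring
      rw [this]; simp only [sInt, integral_neg]; ring
    rw [h3] at h1
    linarith
  have hξj : ξ = j.posPart.toSignedMeasure := by
    have := ξ.toSignedMeasure_toJordanDecomposition
    rw [← this, JordanDecomposition.toSignedMeasure]
    ext s hs
    simp only [sub_apply]
    rw [Measure.toSignedMeasure_apply_measurable hs, Measure.toSignedMeasure_apply_measurable hs,
      ← hj, hneg]
    simp
  have hs : ∀ f, sInt ξ f = ∫ x, f x ∂j.posPart := fun f => by
    rw [hξj]; exact sInt_toSignedMeasure _ f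
  refine ⟨j.posPart, inferInstance, ⟨⟨?_⟩, ?_⟩, hξj⟩
  -- total mass one: the competitors `φ + t`, whose transform is `φ^{c₂} - t`
  · have hconst : ∀ t : ℝ, t * j.posPart.real Set.univ ≤ t := by
      intro t
      have hc : ContinuousOn (fun x => φ x + t) Ω := hφ.add continuousOn_const
      have h1 := hξ (fun x => φ x + t) hc
      have h2 : ∀ x, ctrans c2 Ω φ x - t ≤ ctrans c2 Ω (fun x => φ x + t) x := fun x =>
        le_ctrans hne fun y hy => by
          have := ctrans_add_le hΩ hφ x hy
          linarith
      have h3 := integral_mono ((hInt _ hφ).sub (integrable_const t))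
        (hInt _ hc) h2
      simp only [Pi.sub_apply] at h3
      rw [integral_sub (hInt _ hφ) (integrable_const t), integral_const, probReal_univ,
        one_smul] at h3
      rw [hs] at h1
      have : (fun x => φ x + t - φ x) = fun _ => t := by ext; ring
      rw [this, integral_const, smul_eq_mul] at h1
      linarith
    have h1 := hconst 1
    have h2 := hconst (-1)
    have h3 : j.posPart.real Set.univ = 1 := by linarith
    rw [measureReal_def] at h3
    rw [← ENNReal.ofReal_toReal (measure_ne_top j.posPart Set.univ), h3, ENNReal.ofReal_one]
  -- concentration on `Ω`: the competitor `φ + 1_{Ωᶜ}` has the same transform as `φ`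
  · have hm := hΩ.measurableSet.compl
    have heq : Set.EqOn (fun x => φ x + Ωᶜ.indicator 1 x) φ Ω := fun x hx => by simp [hx]
    have h1 := hξ (fun x => φ x + Ωᶜ.indicator 1 x) (hφ.congr heq)
    simp only [ctrans_congr heq, hs] at h1
    have : (fun x => φ x + Ωᶜ.indicator 1 x - φ x) = Ωᶜ.indicator (1 : Ed d → ℝ) := by
      ext; simp
    rw [this, integral_indicator_one hm] at h1
    have h2 : j.posPart.real Ωᶜ = 0 := le_antisymm (by linarith) measureReal_nonneg
    exact (measureReal_eq_zero_iff).1 h2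

/-- A positive measure `ρ` on `Ω` is a subgradient at `φ` iff `φ` maximizes the dual functional. -/
lemma mem_subdiffC_iff_dual_max (hΩ : IsCompact Ω) {μ ρ : Measure (Ed d)}
    [IsFiniteMeasure ρ] (hρ : ρ Ωᶜ = 0) {φ : Ed d → ℝ} (hφ : ContinuousOn φ Ω) :
    ρ.toSignedMeasure ∈ subdiffC Ω μ φ ↔ ∀ ψ : Ed d → ℝ, ContinuousOn ψ Ω →
      (∫ x, ctrans c2 Ω ψ x ∂μ) + ∫ x, ψ x ∂ρ ≤ (∫ x, ctrans c2 Ω φ x ∂μ) + ∫ x, φ x ∂ρ := by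
  refine forall₂_congr fun ψ hψ => ?_
  rw [sInt_toSignedMeasure, integral_sub (integrable_of_concentrated hΩ hρ hψ)
    (integrable_of_concentrated hΩ hρ hφ)]
  constructor <;> intro h <;> linarith

lemma subdiffC_nonempty (hΩ : IsCompact Ω) (hne : Ω.Nonempty) {μ : Measure (Ed d)}
    (hμ : ProbOn Ω μ) {φ : Ed d → ℝ} (hφ : ContinuousOn φ Ω) : (subdiffC Ω μ φ).Nonempty := by
  have : CompactSpace Ω := isCompact_iff_compactSpace.1 hΩ
  have : Nonempty Ω := hne.to_subtype
  have := isProb_comap hΩ hμ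
  let c : C(Ω × Ω, ℝ) := ⟨fun p => c2 (p.1 : Ed d) p.2, by
    have := continuous_c2 (d := d); fun_prop⟩
  obtain ⟨ρ, hρf, hρ⟩ := exists_subgradient (μ.comap (Subtype.val : Ω → Ed d)) c
    ⟨Ω.domRestrict φ, continuousOn_iff_continuous_domRestrict.1 hφ⟩
  refine ⟨(ρ.map Subtype.val).toSignedMeasure, fun ψ hψ => ?_⟩
  have h := hρ ⟨Ω.domRestrict ψ, continuousOn_iff_continuous_domRestrict.1 hψ⟩
  rw [sInt_toSignedMeasure, (MeasurableEmbedding.subtype_coe hΩ.measurableSet).integral_map,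
    ← integral_comap_of_concentrated hΩ hμ.2, ← integral_comap_of_concentrated hΩ hμ.2]
  simp only [ctrans_eq_iInf]
  exact h

/-! ### Differentiability of the transform and the transport map -/

/-- `φ^{c₂}(x) - |x|²/2 = inf_y (|y|²/2 - φ(y) - ⟨x, y⟩)` is an infimum of uniformly Lipschitz
functions of `x`. -/
lemma exists_lipschitzWith_ctrans_sub (hΩ : IsCompact Ω) (hne : Ω.Nonempty) {φ : Ed d → ℝ}
    (hφ : ContinuousOn φ Ω) :
    ∃ K, LipschitzWith K (fun x => ctrans c2 Ω φ x - ‖x‖ ^ 2 / 2) := by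
  obtain ⟨R, hR⟩ := hΩ.isBounded.exists_norm_le
  have hR0 : 0 ≤ R := (norm_nonneg _).trans (hR _ hne.some_mem)
  refine ⟨⟨R, hR0⟩, LipschitzWith.of_le_add_mul _ fun x z => ?_⟩
  have : ctrans c2 Ω φ x - ‖x‖ ^ 2 / 2 + ‖z‖ ^ 2 / 2 - R * dist x z ≤ ctrans c2 Ω φ z := by
    refine le_ctrans hne fun y hy => ?_
    have h1 := ctrans_add_le hΩ hφ x hy
    have h2 : inner ℝ (z - x) y ≤ R * dist x z := by
      refine (real_inner_le_norm _ _).trans ?_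
      rw [dist_comm, dist_eq_norm, mul_comm]
      exact mul_le_mul_of_nonneg_right (hR y hy) (norm_nonneg _)
    rw [inner_sub_left] at h2
    unfold c2 at h1 ⊢
    rw [norm_sub_sq_real] at h1 ⊢
    linarith
  change _ ≤ _ + R * dist x z
  linarith

/-- Rademacher's theorem applied to `φ^{c₂} - |·|²/2`. -/
lemma ae_differentiableAt_ctrans (hΩ : IsCompact Ω) (hne : Ω.Nonempty) {φ : Ed d → ℝ}
    (hφ : ContinuousOn φ Ω) :
    ∀ᵐ x ∂(volume : Measure (Ed d)), DifferentiableAt ℝ (ctrans c2 Ω φ) x := by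
  obtain ⟨K, hK⟩ := exists_lipschitzWith_ctrans_sub hΩ hne hφ
  filter_upwards [hK.ae_differentiableAt (μ := volume)] with x hx
  have h1 : DifferentiableAt ℝ (fun z : Ed d => ‖z‖ ^ 2) x := differentiableAt_id.norm_sq ℝ
  have h2 : DifferentiableAt ℝ (fun z : Ed d => ‖z‖ ^ 2 / 2) x := by
    simpa only [div_eq_mul_inv] using h1.mul_const (2 : ℝ)⁻¹
  have := DifferentiableAt.add hx h2
  refine this.congr_of_eventuallyEq (Eventually.of_forall fun z => ?_)
  simp

/-- At a contact pair `(x, y)` the function `z ↦ c₂(z,y) - φ^{c₂}(z)` is minimal at `z = x`; the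
first-order condition there reads `x - y = ∇φ^{c₂}(x)`. -/
lemma eq_sub_gradient (hΩ : IsCompact Ω) {φ : Ed d → ℝ}
    (hφ : ContinuousOn φ Ω) {x y : Ed d} (hx : DifferentiableAt ℝ (ctrans c2 Ω φ) x)
    (hy : y ∈ Ω) (hxy : ctrans c2 Ω φ x + φ y = c2 x y) :
    y = x - gradient (ctrans c2 Ω φ) x := by
  have h1 : HasGradientAt (fun z => c2 z y) (x - y) x := by
    rw [hasGradientAt_iff_hasFDerivAt]
    have h := (((hasFDerivAt_id x).sub_const y).norm_sq).mul_const (1 / 2 : ℝ)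
    have e : (fun z : Ed d => c2 z y) = fun z => ‖id z - y‖ ^ 2 * (1 / 2) := by
      ext z; simp [c2]; ring
    rw [e]
    refine h.congr_fderiv ?_
    ext z
    simp
  have h2 := h1.hasFDerivAt.sub hx.hasGradientAt.hasFDerivAt
  have hmin : IsLocalMin (fun z => c2 z y - ctrans c2 Ω φ z) x := by
    refine Eventually.of_forall fun z => ?_
    have := ctrans_add_le hΩ hφ z hy
    simp only; linarith
  have h3 := hmin.hasFDerivAt_eq_zero h2
  rw [← map_sub, LinearIsometryEquiv.map_eq_zero_iff] at h3
  rw [eq_sub_iff_add_eq, ← sub_eq_zero]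
  rw [← neg_eq_zero, ← h3]; abel

/-- The plan given by duality is concentrated on contact pairs, hence on the graph of `T`. -/
lemma eq_map_of_dual_max (hΩ : IsCompact Ω) (hne : Ω.Nonempty) {ρ μ : Measure (Ed d)}
    (hρ : ProbOn Ω ρ) (hμ : ProbOn Ω μ) {φ : Ed d → ℝ} (hφ : ContinuousOn φ Ω)
    (hmax : ∀ ψ : Ed d → ℝ, ContinuousOn ψ Ω →
      (∫ x, ctrans c2 Ω ψ x ∂μ) + ∫ x, ψ x ∂ρ ≤ (∫ x, ctrans c2 Ω φ x ∂μ) + ∫ x, φ x ∂ρ)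
    (hac : μ ≪ (volume : Measure (Ed d))) {T : Ed d → Ed d} (hT : Measurable T)
    (hTg : ∀ᵐ x ∂μ, T x = x - gradient (ctrans c2 Ω φ) x) : ρ = μ.map T := by
  obtain ⟨γ, hγ, hc⟩ := exists_plan_of_dual_max hΩ hne hρ hμ hφ hmax
  obtain ⟨h1, h2, h3⟩ := integral_defect hΩ hρ hμ hγ hφ
  rw [hc, sub_self, integral_eq_zero_iff_of_nonneg_ae h1 h2] at h3
  obtain ⟨h4, -⟩ := coupling_facts hΩ hρ hμ hγ
  have h5 : ∀ᵐ x ∂μ, T x = x - gradient (ctrans c2 Ω φ) x ∧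
      DifferentiableAt ℝ (ctrans c2 Ω φ) x :=
    hTg.and (hac.ae_le (ae_differentiableAt_ctrans hΩ hne hφ))
  rw [← hγ.2] at h5
  have h6 : (Prod.fst : Ed d × Ed d → Ed d) =ᵐ[γ] T ∘ Prod.snd := by
    filter_upwards [h3, h4, ae_of_ae_map measurable_snd.aemeasurable h5] with p hp hΩp hg
    have hp' : c2 p.1 p.2 - (ctrans c2 Ω φ p.2 + φ p.1) = 0 := hp
    rw [Function.comp_apply, hg.1]
    refine eq_sub_gradient hΩ hφ hg.2 hΩp.1 ?_
    rw [c2_comm]; linarith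
  rw [← hγ.1, ← hγ.2, Measure.map_map hT measurable_snd]
  exact Measure.map_congr h6

end Concrete

/-- the subdifferential of `F(φ) = -∫ φ^{c₂} dμ`. For `Ω ⊂ ℝ^d` compact
convex with non-negligible interior and `μ ∈ 𝒫(Ω)`: for every `φ ∈ C(Ω)`, `∂F(φ)` is
nonempty and consists exactly of (the signed measures induced by) those `ρ ∈ 𝒫(Ω)` with
`∫ φ^{c₂} dμ + ∫ φ dρ = (1/2)W₂²(ρ,μ)`. If moreover `∂Ω` is Lebesgue-null, `μ ≪ Lebesgue`,
and `T` is a Borel map μ-a.e. equal to `I - ∇φ^{c₂}`, then `∂F(φ) = {T_# μ}`. -/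
theorem stmt9 (d : ℕ) (Ω : Set (Ed d)) (hΩc : IsCompact Ω) (hΩconv : Convex ℝ Ω)
    (hΩint : volume (interior Ω) ≠ 0)
    (μ : Measure (Ed d)) (hμ : ProbOn Ω μ)
    (φ : Ed d → ℝ) (hφ : ContinuousOn φ Ω) :
    ((subdiffC Ω μ φ).Nonempty ∧
      ∀ ξ : SignedMeasure (Ed d),
        ξ ∈ subdiffC Ω μ φ ↔
          ∃ ρ : Measure (Ed d), ProbOn Ω ρ ∧
            (∫ x, ctrans c2 Ω φ x ∂μ) + ∫ x, φ x ∂ρ = W2sq ρ μ / 2 ∧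
            ∀ s : Set (Ed d), MeasurableSet s → ξ s = (ρ s).toReal) ∧
    (volume (frontier Ω) = 0 → μ ≪ (volume : Measure (Ed d)) →
      ∀ T : Ed d → Ed d, Measurable T →
        (∀ᵐ x ∂μ, T x = x - gradient (ctrans c2 Ω φ) x) →
        ∀ ξ : SignedMeasure (Ed d),
          ξ ∈ subdiffC Ω μ φ ↔
            ∀ s : Set (Ed d), MeasurableSet s → ξ s = ((μ.map T) s).toReal) := by
  have hne : Ω.Nonempty := by
    by_contra h
    rw [Set.not_nonempty_iff_eq_empty] at h
    simp [h] at hΩint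
  have hnon := subdiffC_nonempty hΩc hne hμ hφ
  refine ⟨⟨hnon, fun ξ => ⟨fun hξ => ?_, ?_⟩⟩, fun _ hac T hT hTg ξ => ?_⟩
  · obtain ⟨ρ, hρf, hρ, rfl⟩ := probOn_of_mem_subdiffC hΩc hne hμ hφ hξ
    have := hρ.1
    obtain ⟨γ, hγ, hc⟩ := exists_plan_of_dual_max hΩc hne hρ hμ hφ
      ((mem_subdiffC_iff_dual_max hΩc hρ.2 hφ).1 hξ)
    refine ⟨ρ, hρ, le_antisymm (W2sq_half_le hΩc hρ hμ hφ) (hc ▸ W2sq_le hγ), ?_⟩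
    exact (eq_toSignedMeasure_iff ρ _).2 rfl
  · rintro ⟨ρ, hρ, hW, hs⟩
    have := hρ.1
    rw [(eq_toSignedMeasure_iff ρ ξ).1 hs, mem_subdiffC_iff_dual_max hΩc hρ.2 hφ, hW]
    exact fun ψ hψ => W2sq_half_le hΩc hρ hμ hψ
  · have := hμ.1
    have huniq : ∀ ξ' ∈ subdiffC Ω μ φ, ξ' = (μ.map T).toSignedMeasure := by
      intro ξ' hξ'
      obtain ⟨ρ, hρf, hρ, rfl⟩ := probOn_of_mem_subdiffC hΩc hne hμ hφ hξ'
      have := hρ.1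
      have := eq_map_of_dual_max hΩc hne hρ hμ hφ
        ((mem_subdiffC_iff_dual_max hΩc hρ.2 hφ).1 hξ') hac hT hTg
      subst this
      rfl
    rw [eq_toSignedMeasure_iff]
    refine ⟨huniq ξ, ?_⟩
    rintro rfl
    obtain ⟨ξ', hξ'⟩ := hnon
    rwa [← huniq ξ' hξ']
end
end

section
/- Let Ω ⊂ ℝ^d be compact and convex with non-negligible interior, μ, ν ∈ 𝒫(Ω) with μ absolutely continuous with respect to Lebesgue measure, and λ > 0. Then the minimal value of the WROF problem min_{ρ ∈ 𝒫(Ω)} (1/2)W₂²(μ,ρ) + λ W₁(ρ,ν) equals the optimal transport cost 𝓘_{c_{2,λ}}(μ,ν) = inf{∫_{Ω×Ω} c_{2,λ}(x,y) dγ : γ a coupling of μ and ν}. -/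
/-!
The Huber cost is the infimal convolution of `‖·‖² / 2` and `lam * ‖·‖`:
`huber lam x z ≤ ‖x - y‖² / 2 + lam * ‖y - z‖` for every `y` (`huber_le`), with equality when `y` is
the point of the segment `[x, z]` at distance `min ‖x - z‖ lam` from `x` (`midpt`).

The inequality passes to transport costs by gluing a coupling of `(μ, ρ)` with a coupling of
`(ρ, ν)` along `ρ` (`exists_gluing`), so the Huber cost is a lower bound for the WROF functional.
Conversely, Prokhorov's theorem yields an optimal plan for the Huber cost
(`exists_optimal_huber`). Its image under `midpt` is a probability measure `ρ` on the convex set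
`Ω`, and the plans `(x, midpt)` and `(midpt, y)` show that `ρ` attains the bound.
-/

open MeasureTheory Filter Topology

noncomputable section

variable {d : ℕ}

/-! ### The Huber cost as an infimal convolution -/

/-- A branch-free form of the Huber cost, from which its continuity is visible. -/
lemma huber_eq (lam : ℝ) (x y : Ed d) :
    huber lam x y = min ‖x - y‖ lam ^ 2 / 2 + lam * (‖x - y‖ - min ‖x - y‖ lam) := by
  unfold huber
  split_ifs with h
  · rw [min_eq_left h]; ring
  · rw [min_eq_right (not_le.1 h).le]; ring

lemma huber_nonneg {lam : ℝ} (hlam : 0 < lam) (x y : Ed d) : 0 ≤ huber lam x y := by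
  rw [huber_eq]
  have h := min_le_left ‖x - y‖ lam
  have := mul_nonneg hlam.le (sub_nonneg.2 h)
  positivity

lemma continuous_huber (lam : ℝ) : Continuous fun p : Ed d × Ed d => huber lam p.1 p.2 := by
  simp only [huber_eq]
  fun_prop

lemma huber_le {lam : ℝ} (hlam : 0 < lam) (x y z : Ed d) :
    huber lam x z ≤ ‖x - y‖ ^ 2 / 2 + lam * ‖y - z‖ := by
  have h := norm_sub_le_norm_sub_add_norm_sub x y z
  have hb := norm_nonneg (y - z)
  have hn := norm_nonneg (x - z)
  unfold huber
  split_ifs with hc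
  · nlinarith [sq_nonneg (‖x - z‖ - ‖x - y‖), mul_le_mul_of_nonneg_right hc hb,
      mul_le_mul_of_nonneg_left h hn]
  · nlinarith [sq_nonneg (‖x - y‖ - lam), mul_le_mul_of_nonneg_left h hlam.le]

/-- The point of the segment `[x, y]` at distance `min ‖x - y‖ lam` from `x`. Dividing by the
maximum instead of `‖x - y‖` keeps the formula continuous on the diagonal. -/
def midpt (lam : ℝ) (p : Ed d × Ed d) : Ed d :=
  p.1 + (lam / max ‖p.1 - p.2‖ lam) • (p.2 - p.1)

lemma continuous_midpt {lam : ℝ} (hlam : 0 < lam) : Continuous (midpt (d := d) lam) := by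
  unfold midpt
  have h : ∀ p : Ed d × Ed d, max ‖p.1 - p.2‖ lam ≠ 0 :=
    fun p => (hlam.trans_le (le_max_right _ _)).ne'
  exact continuous_fst.add ((continuous_const.div (by fun_prop) h).smul (by fun_prop))

lemma midpt_mem {lam : ℝ} (hlam : 0 < lam) {Ω : Set (Ed d)} (hΩ : Convex ℝ Ω)
    {p : Ed d × Ed d} (h₁ : p.1 ∈ Ω) (h₂ : p.2 ∈ Ω) : midpt lam p ∈ Ω :=
  hΩ.add_smul_sub_mem h₁ h₂
    ⟨by positivity, div_le_one_of_le₀ (le_max_right _ _) (hlam.le.trans (le_max_right _ _))⟩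

lemma ratio_mul_norm {lam : ℝ} (hlam : 0 < lam) (n : ℝ) :
    lam / max n lam * n = min n lam := by
  rcases le_total n lam with h | h
  · rw [max_eq_right h, min_eq_left h, div_self hlam.ne', one_mul]
  · rw [max_eq_left h, min_eq_right h, div_mul_cancel₀ _ (hlam.trans_le h).ne']

lemma midpt_eq {lam : ℝ} (hlam : 0 < lam) (p : Ed d × Ed d) :
    ‖p.1 - midpt lam p‖ ^ 2 / 2 + lam * ‖midpt lam p - p.2‖ = huber lam p.1 p.2 := by
  have hr := ratio_mul_norm hlam ‖p.1 - p.2‖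
  have ht0 : 0 ≤ lam / max ‖p.1 - p.2‖ lam := by positivity
  have ht1 : lam / max ‖p.1 - p.2‖ lam ≤ 1 :=
    div_le_one_of_le₀ (le_max_right _ _) (hlam.le.trans (le_max_right _ _))
  rw [huber_eq, ← hr]
  unfold midpt
  generalize lam / max ‖p.1 - p.2‖ lam = t at *
  have e₁ : p.1 - (p.1 + t • (p.2 - p.1)) = t • (p.1 - p.2) := by module
  have e₂ : p.1 + t • (p.2 - p.1) - p.2 = (1 - t) • (p.1 - p.2) := by module
  rw [e₁, e₂, norm_smul, norm_smul, Real.norm_of_nonneg ht0,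
    Real.norm_of_nonneg (sub_nonneg.2 ht1)]
  ring

/-! ### Couplings of measures on a compact set -/

lemma IsCoupling.isProb {μ ν : Measure (Ed d)} {γ : Measure (Ed d × Ed d)}
    (h : IsCoupling μ ν γ) [IsProbabilityMeasure μ] : IsProbabilityMeasure γ := by
  constructor
  have := congrArg (fun m => m Set.univ) h.1
  simpa [Measure.map_apply measurable_fst MeasurableSet.univ] using this

lemma IsCoupling.ae_mem {Ω : Set (Ed d)} {μ ν : Measure (Ed d)} {γ : Measure (Ed d × Ed d)}
    (h : IsCoupling μ ν γ) (hμ : ProbOn Ω μ) (hν : ProbOn Ω ν) :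
    ∀ᵐ p ∂γ, p ∈ Ω ×ˢ Ω := by
  have h₁ : ∀ᵐ x ∂(γ.map Prod.fst), x ∈ Ω := by rw [h.1]; exact hμ.2
  have h₂ : ∀ᵐ x ∂(γ.map Prod.snd), x ∈ Ω := by rw [h.2]; exact hν.2
  filter_upwards [ae_of_ae_map measurable_fst.aemeasurable h₁,
    ae_of_ae_map measurable_snd.aemeasurable h₂] with p hp₁ hp₂ using ⟨hp₁, hp₂⟩

lemma IsCoupling.integrable {Ω : Set (Ed d)} (hΩ : IsCompact Ω) {μ ν : Measure (Ed d)}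
    {γ : Measure (Ed d × Ed d)} (h : IsCoupling μ ν γ) (hμ : ProbOn Ω μ) (hν : ProbOn Ω ν)
    {f : Ed d × Ed d → ℝ} (hf : Continuous f) : Integrable f γ := by
  have := hμ.1
  have := h.isProb
  obtain ⟨C, hC⟩ := (hΩ.prod hΩ).exists_bound_of_continuousOn hf.continuousOn
  refine Integrable.of_bound hf.aestronglyMeasurable C ?_
  filter_upwards [h.ae_mem hμ hν] with p hp using hC p hp

lemma tCost_le {c : Ed d → Ed d → ℝ} (hc : ∀ x y, 0 ≤ c x y) {μ ν : Measure (Ed d)}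
    {γ : Measure (Ed d × Ed d)} (h : IsCoupling μ ν γ) : tCost c μ ν ≤ ∫ p, c p.1 p.2 ∂γ := by
  refine csInf_le ⟨0, ?_⟩ ⟨γ, h, rfl⟩
  rintro r ⟨γ', -, rfl⟩
  exact integral_nonneg fun p => hc _ _

lemma isCoupling_prod (μ ν : Measure (Ed d)) [IsProbabilityMeasure μ] [IsProbabilityMeasure ν] :
    IsCoupling μ ν (μ.prod ν) := by
  constructor
  · simp
  · simp

lemma le_tCost {c : Ed d → Ed d → ℝ} {μ ν : Measure (Ed d)} [IsProbabilityMeasure μ]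
    [IsProbabilityMeasure ν] {a : ℝ}
    (h : ∀ γ, IsCoupling μ ν γ → a ≤ ∫ p, c p.1 p.2 ∂γ) : a ≤ tCost c μ ν := by
  refine le_csInf ⟨_, μ.prod ν, isCoupling_prod μ ν, rfl⟩ ?_
  rintro r ⟨γ, hγ, rfl⟩
  exact h γ hγ

/-- Gluing lemma: the second plan is disintegrated along its first marginal `ρ`, and its conditional
kernel is composed with the first plan. -/
lemma exists_gluing {μ ρ ν : Measure (Ed d)} [IsProbabilityMeasure μ] [IsProbabilityMeasure ρ]
    {γ₁ γ₂ : Measure (Ed d × Ed d)} (h₁ : IsCoupling μ ρ γ₁) (h₂ : IsCoupling ρ ν γ₂) :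
    ∃ π : Measure ((Ed d × Ed d) × Ed d),
      π.map Prod.fst = γ₁ ∧ π.map (fun q => (q.1.2, q.2)) = γ₂ := by
  have := h₁.isProb
  have := h₂.isProb
  refine ⟨γ₁.compProd (γ₂.condKernel.comap Prod.snd measurable_snd), ?_, ?_⟩
  · exact Measure.fst_compProd _ _
  · have hm : Measurable fun q : (Ed d × Ed d) × Ed d => (q.1.2, q.2) := by fun_prop
    refine Measure.ext_of_lintegral _ fun f hf => ?_
    rw [lintegral_map hf hm, Measure.lintegral_compProd (by fun_prop)]
    simp only [ProbabilityTheory.Kernel.comap_apply]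
    conv_rhs => rw [← γ₂.disintegrate γ₂.condKernel, Measure.lintegral_compProd hf]
    have e : γ₂.fst = γ₁.map Prod.snd := h₂.1.trans h₁.2.symm
    rw [e, lintegral_map hf.lintegral_kernel_prod_right' measurable_snd]

/-! ### Lower bound and existence of an optimal plan -/

lemma huber_le_plans {Ω : Set (Ed d)} (hΩ : IsCompact Ω) {μ ρ ν : Measure (Ed d)}
    (hμ : ProbOn Ω μ) (hρ : ProbOn Ω ρ) (hν : ProbOn Ω ν) {lam : ℝ} (hlam : 0 < lam)
    {γ₁ γ₂ : Measure (Ed d × Ed d)} (h₁ : IsCoupling μ ρ γ₁) (h₂ : IsCoupling ρ ν γ₂) :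
    tCost (huber lam) μ ν ≤
      (∫ p, ‖p.1 - p.2‖ ^ 2 ∂γ₁) / 2 + lam * ∫ p, ‖p.1 - p.2‖ ∂γ₂ := by
  have := hμ.1
  have := hρ.1
  obtain ⟨π, hπ₁, hπ₂⟩ := exists_gluing h₁ h₂
  have m₂ : Measurable fun q : (Ed d × Ed d) × Ed d => (q.1.2, q.2) := by fun_prop
  have m₃ : Measurable fun q : (Ed d × Ed d) × Ed d => (q.1.1, q.2) := by fun_prop
  have hγ : IsCoupling μ ν (π.map fun q => (q.1.1, q.2)) := by
    constructor
    · rw [Measure.map_map measurable_fst m₃, ← h₁.1, ← hπ₁,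
        Measure.map_map measurable_fst measurable_fst]
      rfl
    · rw [Measure.map_map measurable_snd m₃, ← h₂.2, ← hπ₂,
        Measure.map_map measurable_snd m₂]
      rfl
  have c₁ : Continuous fun p : Ed d × Ed d => ‖p.1 - p.2‖ ^ 2 := by fun_prop
  have c₂ : Continuous fun p : Ed d × Ed d => ‖p.1 - p.2‖ := by fun_prop
  have i₁ := h₁.integrable hΩ hμ hρ c₁
  have i₂ := h₂.integrable hΩ hρ hν c₂
  have i₃ := hγ.integrable hΩ hμ hν (continuous_huber lam)
  have j₁ := i₁
  have j₂ := i₂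
  rw [← hπ₁] at j₁
  rw [← hπ₂] at j₂
  replace j₁ := j₁.comp_measurable measurable_fst
  replace j₂ := j₂.comp_measurable m₂
  have j₃ := i₃.comp_measurable m₃
  refine (tCost_le (huber_nonneg hlam) hγ).trans ?_
  rw [← hπ₁, ← hπ₂, integral_map m₃.aemeasurable (continuous_huber lam).aestronglyMeasurable,
    integral_map measurable_fst.aemeasurable c₁.aestronglyMeasurable,
    integral_map m₂.aemeasurable c₂.aestronglyMeasurable, ← integral_div, ← integral_const_mul]
  refine le_trans ?_ (integral_add (j₁.div_const 2) (j₂.const_mul lam)).le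
  exact integral_mono j₃ ((j₁.div_const 2).add (j₂.const_mul lam))
    fun q => huber_le hlam _ _ _

lemma huber_le_wrof {Ω : Set (Ed d)} (hΩ : IsCompact Ω) {μ ρ ν : Measure (Ed d)}
    (hμ : ProbOn Ω μ) (hρ : ProbOn Ω ρ) (hν : ProbOn Ω ν) {lam : ℝ} (hlam : 0 < lam) :
    tCost (huber lam) μ ν ≤ wrof lam μ ν ρ := by
  have := hμ.1
  have := hρ.1
  have := hν.1
  unfold wrof
  have key : ∀ γ₁, IsCoupling μ ρ γ₁ →
      tCost (huber lam) μ ν - lam * W1 ρ ν ≤ (∫ p, ‖p.1 - p.2‖ ^ 2 ∂γ₁) / 2 := by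
    intro γ₁ h₁
    have : (tCost (huber lam) μ ν - (∫ p, ‖p.1 - p.2‖ ^ 2 ∂γ₁) / 2) / lam ≤ W1 ρ ν :=
      le_tCost fun γ₂ h₂ => by
        rw [div_le_iff₀' hlam]
        linarith [huber_le_plans hΩ hμ hρ hν hlam h₁ h₂]
    rw [div_le_iff₀' hlam] at this
    linarith
  have : 2 * (tCost (huber lam) μ ν - lam * W1 ρ ν) ≤ W2sq μ ρ :=
    le_tCost fun γ₁ h₁ => by linarith [key γ₁ h₁]
  linarith

/-- The couplings of `μ` and `ν` form a weakly compact set, and the Huber cost, truncated above its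
maximum on `Ω ×ˢ Ω`, is bounded and continuous; hence the infimum is attained. -/
lemma exists_optimal_huber {Ω : Set (Ed d)} (hΩ : IsCompact Ω) {μ ν : Measure (Ed d)}
    (hμ : ProbOn Ω μ) (hν : ProbOn Ω ν) {lam : ℝ} (hlam : 0 < lam) :
    ∃ γ, IsCoupling μ ν γ ∧ ∫ p, huber lam p.1 p.2 ∂γ ≤ tCost (huber lam) μ ν := by
  have := hμ.1
  have := hν.1
  let S : Set (ProbabilityMeasure (Ed d × Ed d)) := {γ | IsCoupling μ ν (γ : Measure _)}
  have hclosed : IsClosed S := by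
    have e : S =
        (fun γ => γ.map measurable_fst.aemeasurable) ⁻¹'
            {(⟨μ, hμ.1⟩ : ProbabilityMeasure (Ed d))} ∩
          (fun γ => γ.map measurable_snd.aemeasurable) ⁻¹'
            {(⟨ν, hν.1⟩ : ProbabilityMeasure (Ed d))} := by
      ext γ
      constructor
      · rintro ⟨h₁, h₂⟩
        exact ⟨Subtype.ext h₁, Subtype.ext h₂⟩
      · rintro ⟨h₁, h₂⟩
        exact ⟨congrArg Subtype.val h₁, congrArg Subtype.val h₂⟩
    rw [e]
    exact (isClosed_singleton.preimage (ProbabilityMeasure.continuous_map continuous_fst)).inter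
      (isClosed_singleton.preimage (ProbabilityMeasure.continuous_map continuous_snd))
  have hcomp : IsCompact S := by
    rw [← hclosed.closure_eq]
    refine isCompact_closure_of_isTightMeasureSet ?_
    rw [isTightMeasureSet_iff_exists_isCompact_measure_compl_le]
    rintro ε -
    refine ⟨Ω ×ˢ Ω, hΩ.prod hΩ, ?_⟩
    rintro _ ⟨γ, hγ, rfl⟩
    have h0 : (γ : Measure (Ed d × Ed d)) (Ω ×ˢ Ω)ᶜ = 0 := IsCoupling.ae_mem hγ hμ hν
    exact h0.le.trans zero_le
  have hne : S.Nonempty := ⟨⟨μ.prod ν, inferInstance⟩, isCoupling_prod μ ν⟩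
  obtain ⟨C, hC⟩ := (hΩ.prod hΩ).exists_bound_of_continuousOn (continuous_huber lam).continuousOn
  let g : BoundedContinuousFunction (Ed d × Ed d) ℝ :=
    BoundedContinuousFunction.ofNormedAddCommGroup (fun p => min (huber lam p.1 p.2) |C|)
      ((continuous_huber lam).min continuous_const) |C| (fun p => by
        rw [Real.norm_of_nonneg (le_min (huber_nonneg hlam _ _) (abs_nonneg _))]
        exact min_le_right _ _)
  have hg : ∀ γ : Measure (Ed d × Ed d), IsCoupling μ ν γ →
      ∫ p, g p ∂γ = ∫ p, huber lam p.1 p.2 ∂γ := by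
    intro γ hγ
    refine integral_congr_ae ?_
    filter_upwards [hγ.ae_mem hμ hν] with p hp
    exact min_eq_left ((le_abs_self _).trans ((hC p hp).trans (le_abs_self C)))
  obtain ⟨γ, hγ, hmin⟩ := hcomp.exists_isMinOn hne
    (ProbabilityMeasure.continuous_integral_boundedContinuousFunction g).continuousOn
  refine ⟨γ, hγ, le_tCost fun η hη => ?_⟩
  rw [← hg _ hγ, ← hg _ hη]
  exact hmin (a := (⟨η, hη.isProb⟩ : ProbabilityMeasure _)) hη

/-- the value of WROF is the Huber transport cost. For `Ω ⊂ ℝ^d` compact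
convex with non-negligible interior, `μ, ν ∈ 𝒫(Ω)` with `μ ≪ Lebesgue`, and `λ > 0`, the
minimal value of `min_{ρ ∈ 𝒫(Ω)} (1/2)W₂²(μ,ρ) + λW₁(ρ,ν)` equals `𝓘_{c_{2,λ}}(μ,ν)`. -/
theorem stmt11 (d : ℕ) (Ω : Set (Ed d)) (hΩc : IsCompact Ω) (hΩconv : Convex ℝ Ω)
    (hΩint : volume (interior Ω) ≠ 0)
    (μ ν : Measure (Ed d)) (hμ : ProbOn Ω μ) (hν : ProbOn Ω ν)
    (hμac : μ ≪ (volume : Measure (Ed d)))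
    (lam : ℝ) (hlam : 0 < lam) :
    IsLeast {r : ℝ | ∃ ρ : Measure (Ed d), ProbOn Ω ρ ∧ r = wrof lam μ ν ρ}
      (tCost (huber lam) μ ν) := by
  obtain ⟨γ, hγ, hopt⟩ := exists_optimal_huber hΩc hμ hν hlam
  have := hμ.1
  have := hγ.isProb
  have hm := (continuous_midpt (d := d) hlam).measurable
  have hρ : ProbOn Ω (γ.map (midpt lam)) := by
    refine ⟨Measure.isProbabilityMeasure_map hm.aemeasurable, ?_⟩
    rw [Measure.map_apply hm hΩc.measurableSet.compl]
    exact (hγ.ae_mem hμ hν).mono fun p hp => midpt_mem hlam hΩconv hp.1 hp.2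
  refine ⟨⟨γ.map (midpt lam), hρ, le_antisymm (huber_le_wrof hΩc hμ hρ hν hlam) ?_⟩, ?_⟩
  · have m₁ : Measurable fun p : Ed d × Ed d => (p.1, midpt lam p) := measurable_fst.prodMk hm
    have m₂ : Measurable fun p : Ed d × Ed d => (midpt lam p, p.2) := hm.prodMk measurable_snd
    have h₁ : IsCoupling μ (γ.map (midpt lam)) (γ.map fun p => (p.1, midpt lam p)) := by
      constructor
      · rw [Measure.map_map measurable_fst m₁, ← hγ.1]; rfl
      · rw [Measure.map_map measurable_snd m₁]; rfl
    have h₂ : IsCoupling (γ.map (midpt lam)) ν (γ.map fun p => (midpt lam p, p.2)) := by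
      constructor
      · rw [Measure.map_map measurable_fst m₂]; rfl
      · rw [Measure.map_map measurable_snd m₂, ← hγ.2]; rfl
    have c₁ : Continuous fun p : Ed d × Ed d => ‖p.1 - p.2‖ ^ 2 := by fun_prop
    have c₂ : Continuous fun p : Ed d × Ed d => ‖p.1 - p.2‖ := by fun_prop
    have i₁ := (h₁.integrable hΩc hμ hρ c₁).comp_measurable m₁
    have i₂ := (h₂.integrable hΩc hρ hν c₂).comp_measurable m₂
    have w₁ : W2sq μ (γ.map (midpt lam)) ≤ _ := tCost_le (fun x y => sq_nonneg ‖x - y‖) h₁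
    have w₂ : W1 (γ.map (midpt lam)) ν ≤ _ := tCost_le (fun x y => norm_nonneg (x - y)) h₂
    rw [integral_map m₁.aemeasurable c₁.aestronglyMeasurable] at w₁
    rw [integral_map m₂.aemeasurable c₂.aestronglyMeasurable] at w₂
    have hsum : (∫ p, ‖p.1 - midpt lam p‖ ^ 2 ∂γ) / 2 + lam * ∫ p, ‖midpt lam p - p.2‖ ∂γ
        = ∫ p, huber lam p.1 p.2 ∂γ := by
      rw [← integral_div, ← integral_const_mul]
      refine (integral_add (i₁.div_const 2) (i₂.const_mul lam)).symm.trans ?_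
      exact integral_congr_ae (Eventually.of_forall fun p => midpt_eq hlam p)
    unfold wrof
    have := mul_le_mul_of_nonneg_left w₂ hlam.le
    linarith
  · rintro r ⟨ρ, hρ', rfl⟩
    exact huber_le_wrof hΩc hμ hρ' hν hlam
end
end
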